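/- Let conditions A and B hold. Then the normalized first-rare-event step counts ν*_ε = p_ε ν_ε converge in distribution as ε → 0 to an exponential random variable with parameter 1: P(p_ε ν_ε > t) → e^{−t} for every t ≥ 0, for any family of initial distributions q̄_ε. -/

import Mathlib

/-!
Write the kernel of one step as `P = Q + D`, where `Q` collects the steps without and `D` those
with a rare event, so that the survival probabilities are `uₙ = Qⁿ 1`. With `ρ` the largest entry
of the event probabilities `D 1` one has `uₙ - P uₙ = Qⁿ D 1 - D uₙ ≤ ρ`, and the maximum principle,
uniform in `ε` by condition B, bounds the oscillation of `uₙ` over the states by `K ρ`.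

Stationarity of `π` gives `π uₙ - π uₙ₊₁ = (π D) uₙ`, where `π D` has total mass `p = π D 1`.
Replacing `uₙ` by its mean `π uₙ` costs at most `p K ρ`, so `π uₙ` satisfies the recursion of
`(1 - p)ⁿ` up to this error; as each step contracts by `1 - p`, the errors add up to at most `K ρ`.
Hence `|uₙ - (1 - p)ⁿ| ≤ 2 K ρ` for all `n` and all initial states at once, and it remains to let
`p → 0` in `(1 - p) ^ ⌊t / p⌋`.
-/

open MeasureTheory Filter Set
open scoped Topology ENNReal

noncomputable section

/-- Condition B: there exists a ring chain of states `c 0, c 1, …, c N = c 0`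
containing all states of the phase space, with
`liminf_{ε→0+} p ε (c (k-1)) (c k) > 0` for `k = 1, …, N`. -/
def CondB {m : ℕ} (p : ℝ → Fin m → Fin m → ℝ) : Prop :=
  ∃ N : ℕ, 0 < N ∧ ∃ c : ℕ → Fin m, c N = c 0 ∧
    (∀ i : Fin m, ∃ k ≤ N, c k = i) ∧
    ∀ k < N, 0 < Filter.liminf (fun ε => p ε (c k) (c (k + 1))) (𝓝[>] (0 : ℝ))

/-- `π` is a stationary distribution of the transition matrix `p`. -/
def IsStationaryDist {m : ℕ} (p : Fin m → Fin m → ℝ) (π : Fin m → ℝ) : Prop :=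
  (∀ i, 0 ≤ π i) ∧ (∑ i, π i = 1) ∧ ∀ j, π j = ∑ i, π i * p i j

/-- `p_{ε,i} = P_i(ζ_{ε,1} = 1)`, the probability of occurrence of the rare event during
one transition step, starting from state `i`. -/
def rareP {m : ℕ} {Ω : Type} [MeasurableSpace Ω]
    (Pstart : ℝ → Fin m → Measure Ω) (ζ : ℝ → ℕ → Ω → Bool) (ε : ℝ) (i : Fin m) : ℝ :=
  (Pstart ε i {ω | ζ ε 1 ω = true}).toReal

/-- `p_ε = Σ_i π_{ε,i} p_{ε,i}`, the stationary average of the rare-event probabilities. -/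
def avgRare {m : ℕ} {Ω : Type} [MeasurableSpace Ω]
    (Pstart : ℝ → Fin m → Measure Ω) (ζ : ℝ → ℕ → Ω → Bool) (π : ℝ → Fin m → ℝ)
    (ε : ℝ) : ℝ :=
  ∑ i, π ε i * rareP Pstart ζ ε i

section Matrices

open scoped Matrix
open Matrix (rowStochastic)

variable {ι : Type*} [Fintype ι]

lemma abs_dotProduct_sub_le {w f : ι → ℝ} {c C : ℝ} (hw : 0 ≤ w) (hf : ∀ i, |f i - c| ≤ C) :
    |w ⬝ᵥ f - (w ⬝ᵥ 1) * c| ≤ (w ⬝ᵥ 1) * C := by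
  have hsub : w ⬝ᵥ f - (w ⬝ᵥ 1) * c = ∑ i, w i * (f i - c) := by
    simp only [dotProduct, Pi.one_apply, mul_one, mul_sub, Finset.sum_sub_distrib, Finset.sum_mul]
  calc |w ⬝ᵥ f - (w ⬝ᵥ 1) * c| ≤ ∑ i, |w i * (f i - c)| :=
        hsub ▸ Finset.abs_sum_le_sum_abs _ _
    _ ≤ ∑ i, w i * C := by
        gcongr with i
        rw [abs_mul, abs_of_nonneg (hw i)]
        exact mul_le_mul_of_nonneg_left (hf i) (hw i)
    _ = (w ⬝ᵥ 1) * C := by simp only [dotProduct, Pi.one_apply, mul_one, Finset.sum_mul]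

lemma mulVec_le_mulVec_of_nonneg {M : Matrix ι ι ℝ} (hM : ∀ i j, 0 ≤ M i j) {f g : ι → ℝ}
    (hfg : f ≤ g) : M *ᵥ f ≤ M *ᵥ g :=
  fun i ↦ dotProduct_le_dotProduct_of_nonneg_left hfg (hM i)

lemma mulVec_nonneg {M : Matrix ι ι ℝ} (hM : ∀ i j, 0 ≤ M i j) {f : ι → ℝ} (hf : 0 ≤ f) :
    0 ≤ M *ᵥ f :=
  fun i ↦ dotProduct_nonneg_of_nonneg (hM i) hf

variable [DecidableEq ι]

lemma pow_mulVec_one_le_one {Q : Matrix ι ι ℝ} (hQ : ∀ i j, 0 ≤ Q i j) (hQ1 : Q *ᵥ 1 ≤ 1)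
    (n : ℕ) : Q ^ n *ᵥ 1 ≤ 1 := by
  induction n with
  | zero => rw [pow_zero, Matrix.one_mulVec]
  | succ n ih =>
    rw [pow_succ', ← Matrix.mulVec_mulVec]
    exact (mulVec_le_mulVec_of_nonneg hQ ih).trans hQ1

lemma sub_pow_mulVec_le {P : Matrix ι ι ℝ} (hP : P ∈ rowStochastic ℝ ι) {f : ι → ℝ} {δ : ℝ}
    (hf : f - P *ᵥ f ≤ δ • 1) (l : ℕ) : f - P ^ l *ᵥ f ≤ (l * δ) • 1 := by
  induction l with
  | zero => simp
  | succ l ih =>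
    have hstep : P *ᵥ (f - P ^ l *ᵥ f) ≤ (l * δ) • 1 := by
      simpa only [Matrix.mulVec_smul, hP.2] using mulVec_le_mulVec_of_nonneg hP.1 ih
    calc f - P ^ (l + 1) *ᵥ f = (f - P *ᵥ f) + P *ᵥ (f - P ^ l *ᵥ f) := by
          rw [Matrix.mulVec_sub, Matrix.mulVec_mulVec, ← pow_succ', sub_add_sub_cancel]
      _ ≤ δ • 1 + (l * δ) • 1 := add_le_add hf hstep
      _ = ((l + 1 : ℕ) * δ) • 1 := by rw [← add_smul]; push_cast; ring_nf

/-- Quantitative irreducibility of `P`: every state `j` is reached from every state `i` in some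
number `l` of steps for which the ratio of `l` to the `l`-step weight of `j` is at most `K`.
This ratio is the constant in the maximum principle `HasAccessBound.sub_le`. -/
def HasAccessBound (P : Matrix ι ι ℝ) (K : ℝ) : Prop :=
  ∀ i j, ∃ l : ℕ, 0 < (P ^ l) i j ∧ l / (P ^ l) i j ≤ K

variable {P Q D : Matrix ι ι ℝ} {π : ι → ℝ} {K ρ : ℝ}

lemma HasAccessBound.nonneg [Nonempty ι] (hK : HasAccessBound P K) : 0 ≤ K := by
  obtain ⟨l, hl, hlK⟩ := hK (Classical.arbitrary ι) (Classical.arbitrary ι)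
  exact (by positivity : (0 : ℝ) ≤ l / _).trans hlK

lemma HasAccessBound.sub_le (hK : HasAccessBound P K) (hP : P ∈ rowStochastic ℝ ι) {f : ι → ℝ}
    {δ : ℝ} (hδ : 0 ≤ δ) (hf : f - P *ᵥ f ≤ δ • 1) (i j : ι) : f i - f j ≤ K * δ := by
  have : Nonempty ι := ⟨i⟩
  obtain ⟨x, hx⟩ := Finite.exists_max f
  obtain ⟨l, hl, hlK⟩ := hK x j
  have hPl : P ^ l ∈ rowStochastic ℝ ι := pow_mem hP l
  have hsum : ∑ y, (P ^ l) x y * (f x - f y) = f x - (P ^ l *ᵥ f) x := by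
    simp only [mul_sub, Finset.sum_sub_distrib, ← Finset.sum_mul,
      Matrix.sum_row_of_mem_rowStochastic hPl, one_mul, Matrix.mulVec, dotProduct]
  have hdrop : (P ^ l) x j * (f x - f j) ≤ l * δ :=
    calc (P ^ l) x j * (f x - f j) ≤ ∑ y, (P ^ l) x y * (f x - f y) :=
          Finset.single_le_sum (f := fun y ↦ (P ^ l) x y * (f x - f y))
            (fun y _ ↦ mul_nonneg (hPl.1 x y) (sub_nonneg.2 (hx y))) (Finset.mem_univ j)
      _ = f x - (P ^ l *ᵥ f) x := hsum
      _ ≤ l * δ := by simpa using sub_pow_mulVec_le hP hf l x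
  calc f i - f j ≤ f x - f j := sub_le_sub_right (hx i) _
    _ ≤ l * δ / (P ^ l) x j := by rwa [le_div_iff₀' hl]
    _ = l / (P ^ l) x j * δ := by ring
    _ ≤ K * δ := by gcongr

lemma vecMul_pow_eq_self (hπP : π ᵥ* P = π) (l : ℕ) : π ᵥ* P ^ l = π := by
  induction l with
  | zero => rw [pow_zero, Matrix.vecMul_one]
  | succ l ih => rw [pow_succ, ← Matrix.vecMul_vecMul, ih, hπP]

lemma HasAccessBound.pos_of_vecMul_eq_self (hK : HasAccessBound P K) (hP : ∀ i j, 0 ≤ P i j)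
    (hπ : π ∈ stdSimplex ℝ ι) (hπP : π ᵥ* P = π) (j : ι) : 0 < π j := by
  obtain ⟨i, -, hi⟩ := Finset.exists_lt_of_sum_lt (s := Finset.univ) (f := 0) (g := π)
    (by simp [hπ.2])
  obtain ⟨l, hl, -⟩ := hK i j
  calc 0 < π i * (P ^ l) i j := mul_pos hi hl
    _ ≤ ∑ x, π x * (P ^ l) x j := Finset.single_le_sum (f := fun x ↦ π x * (P ^ l) x j)
        (fun x _ ↦ mul_nonneg (hπ.1 x) (Matrix.pow_apply_nonneg hP l x j)) (Finset.mem_univ i)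
    _ = π j := congrFun (vecMul_pow_eq_self hπP l) j

lemma pow_mulVec_one_sub_mulVec_le (hQ : ∀ i j, 0 ≤ Q i j) (hD : ∀ i j, 0 ≤ D i j)
    (hQD : Q + D ∈ rowStochastic ℝ ι) (hρ0 : 0 ≤ ρ) (hρ : D *ᵥ 1 ≤ ρ • 1) (n : ℕ) :
    Q ^ n *ᵥ 1 - (Q + D) *ᵥ (Q ^ n *ᵥ 1) ≤ ρ • 1 := by
  have hD1 : D *ᵥ 1 = 1 - Q *ᵥ 1 := by
    rw [eq_sub_iff_add_eq', ← Matrix.add_mulVec, hQD.2]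
  have hQ1 : Q *ᵥ 1 ≤ 1 := sub_nonneg.1 (hD1 ▸ mulVec_nonneg hD zero_le_one)
  have hQn : ∀ i j, 0 ≤ (Q ^ n) i j := Matrix.pow_apply_nonneg hQ n
  calc Q ^ n *ᵥ 1 - (Q + D) *ᵥ (Q ^ n *ᵥ 1)
      = Q ^ n *ᵥ (D *ᵥ 1) - D *ᵥ (Q ^ n *ᵥ 1) := by
        rw [hD1, Matrix.mulVec_sub, Matrix.add_mulVec, Matrix.mulVec_mulVec _ Q,
          Matrix.mulVec_mulVec _ _ Q, pow_mul_comm', sub_sub]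
    _ ≤ Q ^ n *ᵥ (D *ᵥ 1) := sub_le_self _ (mulVec_nonneg hD (mulVec_nonneg hQn zero_le_one))
    _ ≤ Q ^ n *ᵥ (ρ • 1) := mulVec_le_mulVec_of_nonneg hQn hρ
    _ = ρ • Q ^ n *ᵥ 1 := Matrix.mulVec_smul ..
    _ ≤ ρ • 1 := smul_le_smul_of_nonneg_left (pow_mulVec_one_le_one hQ hQ1 n) hρ0

lemma abs_sub_pow_le {x : ℕ → ℝ} {p C : ℝ} (hp : p ≤ 1) (hC : 0 ≤ C) (h0 : x 0 = 1)
    (hx : ∀ n, |x (n + 1) - (1 - p) * x n| ≤ p * C) (n : ℕ) : |x n - (1 - p) ^ n| ≤ C := by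
  induction n with
  | zero => simpa [h0]
  | succ n ih =>
    have hp' : 0 ≤ 1 - p := sub_nonneg.2 hp
    calc |x (n + 1) - (1 - p) ^ (n + 1)|
        = |(x (n + 1) - (1 - p) * x n) + (1 - p) * (x n - (1 - p) ^ n)| := by ring_nf
      _ ≤ |x (n + 1) - (1 - p) * x n| + (1 - p) * |x n - (1 - p) ^ n| := by
          rw [← abs_of_nonneg hp', ← abs_mul, abs_of_nonneg hp']
          exact abs_add_le _ _
      _ ≤ p * C + (1 - p) * C := by gcongr; exact hx n
      _ = C := by ring

lemma HasAccessBound.abs_pow_mulVec_one_sub_dotProduct_le (hK : HasAccessBound (Q + D) K)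
    (hQ : ∀ i j, 0 ≤ Q i j) (hD : ∀ i j, 0 ≤ D i j) (hQD : Q + D ∈ rowStochastic ℝ ι)
    (hπ : π ∈ stdSimplex ℝ ι) (hρ0 : 0 ≤ ρ) (hρ : D *ᵥ 1 ≤ ρ • 1) (n : ℕ) (i : ι) :
    |(Q ^ n *ᵥ 1) i - π ⬝ᵥ Q ^ n *ᵥ 1| ≤ K * ρ := by
  have hdefect := pow_mulVec_one_sub_mulVec_le hQ hD hQD hρ0 hρ n
  have hosc (j : ι) : |(Q ^ n *ᵥ 1) j - (Q ^ n *ᵥ 1) i| ≤ K * ρ :=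
    abs_sub_le_iff.2 ⟨hK.sub_le hQD hρ0 hdefect j i, hK.sub_le hQD hρ0 hdefect i j⟩
  rw [abs_sub_comm]
  simpa only [dotProduct_one, hπ.2, one_mul] using abs_dotProduct_sub_le hπ.1 hosc

lemma dotProduct_pow_mulVec_sub_succ (hπQD : π ᵥ* (Q + D) = π) (f : ι → ℝ) (n : ℕ) :
    π ⬝ᵥ Q ^ n *ᵥ f - π ⬝ᵥ Q ^ (n + 1) *ᵥ f = π ᵥ* D ⬝ᵥ Q ^ n *ᵥ f := by
  conv_lhs => enter [1, 1]; rw [← hπQD]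
  rw [Matrix.vecMul_add, add_dotProduct, pow_succ', ← Matrix.mulVec_mulVec,
    Matrix.dotProduct_mulVec π Q, add_sub_cancel_left]

theorem HasAccessBound.abs_pow_mulVec_one_sub_pow_le (hK : HasAccessBound (Q + D) K)
    (hQ : ∀ i j, 0 ≤ Q i j) (hD : ∀ i j, 0 ≤ D i j) (hQD : Q + D ∈ rowStochastic ℝ ι)
    (hπ : π ∈ stdSimplex ℝ ι) (hπQD : π ᵥ* (Q + D) = π) (hρ0 : 0 ≤ ρ) (hρ : D *ᵥ 1 ≤ ρ • 1)
    (n : ℕ) (i : ι) :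
    |(Q ^ n *ᵥ 1) i - (1 - π ⬝ᵥ D *ᵥ 1) ^ n| ≤ 2 * (K * ρ) := by
  have : Nonempty ι := ⟨i⟩
  have hπ1 : π ⬝ᵥ 1 = 1 := by rw [dotProduct_one, hπ.2]
  have havg := hK.abs_pow_mulVec_one_sub_dotProduct_le hQ hD hQD hπ hρ0 hρ
  have hp1 : π ⬝ᵥ D *ᵥ 1 ≤ 1 := by
    have hD1 : D *ᵥ 1 ≤ 1 :=
      calc D *ᵥ 1 ≤ Q *ᵥ 1 + D *ᵥ 1 := le_add_of_nonneg_left (mulVec_nonneg hQ zero_le_one)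
        _ = 1 := by rw [← Matrix.add_mulVec, hQD.2]
    exact (dotProduct_le_dotProduct_of_nonneg_left hD1 hπ.1).trans_eq hπ1
  have hπD : 0 ≤ π ᵥ* D := fun j ↦ Finset.sum_nonneg fun i _ ↦ mul_nonneg (hπ.1 i) (hD i j)
  have hstep (n : ℕ) : |π ⬝ᵥ Q ^ (n + 1) *ᵥ 1 - (1 - π ⬝ᵥ D *ᵥ 1) * π ⬝ᵥ Q ^ n *ᵥ 1|
      ≤ π ⬝ᵥ D *ᵥ 1 * (K * ρ) := by
    rw [Matrix.dotProduct_mulVec π D, abs_sub_comm]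
    convert abs_dotProduct_sub_le hπD (havg n) using 2
    rw [← dotProduct_pow_mulVec_sub_succ hπQD]
    ring
  have hmean : |π ⬝ᵥ Q ^ n *ᵥ 1 - (1 - π ⬝ᵥ D *ᵥ 1) ^ n| ≤ K * ρ :=
    abs_sub_pow_le (x := fun n ↦ π ⬝ᵥ Q ^ n *ᵥ 1) hp1 (mul_nonneg hK.nonneg hρ0)
      (by rw [pow_zero, Matrix.one_mulVec, hπ1]) hstep n
  calc |(Q ^ n *ᵥ 1) i - (1 - π ⬝ᵥ D *ᵥ 1) ^ n|
      ≤ |(Q ^ n *ᵥ 1) i - π ⬝ᵥ Q ^ n *ᵥ 1| + |π ⬝ᵥ Q ^ n *ᵥ 1 - (1 - π ⬝ᵥ D *ᵥ 1) ^ n| :=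
        abs_sub_le _ _ _
    _ ≤ 2 * (K * ρ) := by linarith [havg n i]

end Matrices

section Persistent

variable {α ι : Type*} {F : Filter α}

lemma exists_pos_eventually_le_of_liminf_pos {u : α → ℝ} (hu : 0 < liminf u F) :
    ∃ a > 0, ∀ᶠ x in F, a ≤ u x := by
  by_contra! h
  rw [liminf_eq] at hu
  refine hu.not_ge (Real.sSup_nonpos fun a ha ↦ le_of_not_gt fun ha0 ↦ ?_)
  exact h a ha0 (ha.mono fun _ ↦ not_lt.2)

/-- The transition from `i` to `j` is persistent along `F` if its weight in the family `P` of
matrices is eventually bounded below by a positive constant. These are the edges along which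
states communicate uniformly in the perturbation parameter. -/
def IsPersistent (F : Filter α) (P : α → ι → ι → ℝ) (i j : ι) : Prop :=
  ∃ a > 0, ∀ᶠ x in F, a ≤ P x i j

lemma eventually_reflTransGen_pos [Finite ι] {P : α → ι → ι → ℝ}
    (hconn : ∀ i j, Relation.ReflTransGen (IsPersistent F P) i j) :
    ∀ᶠ x in F, ∀ i j, Relation.ReflTransGen (fun y z ↦ 0 < P x y z) i j := by
  have hpos : ∀ᶠ x in F, ∀ i j, IsPersistent F P i j → 0 < P x i j :=
    eventually_all.2 fun i ↦ eventually_all.2 fun j ↦ eventually_imp_distrib_left.2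
      fun ⟨_, ha, hle⟩ ↦ hle.mono fun _ ↦ ha.trans_le
  filter_upwards [hpos] with x hx i j
  exact Relation.ReflTransGen.mono hx i j (hconn i j)

variable [Fintype ι] [DecidableEq ι]

lemma exists_pos_eventually_le_pow_apply {P : α → Matrix ι ι ℝ}
    (hP : ∀ᶠ x in F, ∀ i j, 0 ≤ P x i j) {i j : ι}
    (hij : Relation.ReflTransGen (IsPersistent F P) i j) :
    ∃ l : ℕ, ∃ b > 0, ∀ᶠ x in F, b ≤ (P x ^ l) i j := by
  induction hij with
  | refl => exact ⟨0, 1, one_pos, by simp⟩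
  | @tail j k _ hjk ih =>
    obtain ⟨l, b, hb, hl⟩ := ih
    obtain ⟨a, ha, hjk⟩ := hjk
    refine ⟨l + 1, b * a, mul_pos hb ha, ?_⟩
    filter_upwards [hP, hl, hjk] with x hP hl hjk
    calc b * a ≤ (P x ^ l) i j * P x j k := by gcongr; exact hb.le.trans hl
      _ ≤ ∑ y, (P x ^ l) i y * P x y k := Finset.single_le_sum
          (f := fun y ↦ (P x ^ l) i y * P x y k)
          (fun y _ ↦ mul_nonneg (Matrix.pow_apply_nonneg hP l i y) (hP y k)) (Finset.mem_univ j)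
      _ = (P x ^ (l + 1)) i k := by rw [pow_succ, Matrix.mul_apply]

lemma exists_eventually_hasAccessBound {P : α → Matrix ι ι ℝ}
    (hP : ∀ᶠ x in F, ∀ i j, 0 ≤ P x i j)
    (hconn : ∀ i j, Relation.ReflTransGen (IsPersistent F P) i j) :
    ∃ K, ∀ᶠ x in F, HasAccessBound (P x) K := by
  choose l b hb hlb using fun i j ↦ exists_pos_eventually_le_pow_apply hP (hconn i j)
  refine ⟨∑ i, ∑ j, l i j / b i j, ?_⟩
  filter_upwards [eventually_all.2 fun i ↦ eventually_all.2 (hlb i)] with x hx i j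
  have hnonneg (i j : ι) : 0 ≤ l i j / b i j := div_nonneg (Nat.cast_nonneg _) (hb i j).le
  refine ⟨l i j, (hb i j).trans_le (hx i j), ?_⟩
  calc l i j / (P x ^ l i j) i j ≤ l i j / b i j :=
        div_le_div_of_nonneg_left (Nat.cast_nonneg _) (hb i j) (hx i j)
    _ ≤ ∑ j, l i j / b i j :=
        Finset.single_le_sum (fun j _ ↦ hnonneg i j) (Finset.mem_univ j)
    _ ≤ ∑ i, ∑ j, l i j / b i j := Finset.single_le_sum (f := fun i ↦ ∑ j, l i j / b i j)
        (fun i _ ↦ Finset.sum_nonneg fun j _ ↦ hnonneg i j) (Finset.mem_univ i)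

end Persistent

lemma CondB.reflTransGen_isPersistent {m : ℕ} {p : ℝ → Fin m → Fin m → ℝ} (hB : CondB p)
    (i j : Fin m) : Relation.ReflTransGen (IsPersistent (𝓝[>] 0) p) i j := by
  obtain ⟨N, -, c, hcN, hcover, hpos⟩ := hB
  have hreach {k l : ℕ} (hkl : k ≤ l) (hl : l ≤ N) :
      Relation.ReflTransGen (IsPersistent (𝓝[>] 0) p) (c k) (c l) := by
    induction l, hkl using Nat.le_induction with
    | base => rfl
    | succ l _ ih =>
      exact (ih (Nat.le_of_succ_le hl)).tail (exists_pos_eventually_le_of_liminf_pos (hpos l hl))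
  obtain ⟨k, hk, rfl⟩ := hcover i
  obtain ⟨l, hl, rfl⟩ := hcover j
  exact (hreach hk le_rfl).trans (hcN ▸ hreach l.zero_le hl)

section MarkovRenewal

variable {ι M Ω : Type*}

lemma measureReal_eq_sum_preimage_inter [Fintype ι] [MeasurableSpace ι]
    [MeasurableSingletonClass ι] [MeasurableSpace Ω] {μ : Measure Ω} [IsFiniteMeasure μ]
    {X : Ω → ι} (hX : Measurable X) (A : Set Ω) :
    μ.real A = ∑ j, μ.real (X ⁻¹' {j} ∩ A) := by
  have hfiber (j : ι) : MeasurableSet (X ⁻¹' {j}) := hX (measurableSet_singleton j)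
  simpa [measureReal_restrict_apply (hfiber _)] using
    (sum_measureReal_preimage_singleton (μ := μ.restrict A) Finset.univ fun j _ ↦ hfiber j).symm

/-- The event that the states at times `0, …, n` are `I 0, …, I n` and the marks at times
`1, …, n` are `Z 1, …, Z n`; the initial mark is left free. -/
def pathEvent (η : ℕ → Ω → ι) (ζ : ℕ → Ω → M) (I : ℕ → ι) (Z : ℕ → M) (n : ℕ) : Set Ω :=
  {ω | ∀ k ≤ n, η k ω = I k ∧ (1 ≤ k → ζ k ω = Z k)}

/-- The product of the one-step weights `R i j z` along the first `n` steps of the path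
with states `I` and marks `Z`. -/
def pathWeight (R : ι → ι → M → ℝ) (I : ℕ → ι) (Z : ℕ → M) (n : ℕ) : ℝ :=
  ∏ k ∈ Finset.Icc 1 n, R (I (k - 1)) (I k) (Z k)

/-- The matrix of the weights of the transitions that carry the mark `z`. -/
def markMatrix (R : ι → ι → M → ℝ) (z : M) : Matrix ι ι ℝ :=
  Matrix.of fun i j ↦ R i j z

/-- `(η, ζ)` is, under each `μ i`, a Markov renewal process started in the state `i` whose
steps from `i` to `j` with mark `z` have probability `R i j z`. Nonnegativity of `R` is not
part of the definition, as only the products along paths are tied to probabilities. -/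
structure IsMarkovRenewal [MeasurableSpace ι] [MeasurableSpace M] [MeasurableSpace Ω]
    (η : ℕ → Ω → ι) (ζ : ℕ → Ω → M) (μ : ι → Measure Ω) (R : ι → ι → M → ℝ) : Prop where
  isProbabilityMeasure : ∀ i, IsProbabilityMeasure (μ i)
  measurable_state : ∀ n, Measurable (η n)
  measurable_mark : ∀ n, Measurable (ζ n)
  measure_pathEvent : ∀ n I Z,
    μ (I 0) (pathEvent η ζ I Z n) = ENNReal.ofReal (pathWeight R I Z n)

open Function (update)

open scoped Matrix

lemma pathEvent_update_succ (η : ℕ → Ω → ι) (ζ : ℕ → Ω → M) (I : ℕ → ι) (Z : ℕ → M) (n : ℕ)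
    (j : ι) (z : M) :
    pathEvent η ζ (update I (n + 1) j) (update Z (n + 1) z) (n + 1)
      = pathEvent η ζ I Z n ∩ {ω | η (n + 1) ω = j ∧ ζ (n + 1) ω = z} := by
  ext ω
  have hprefix : ∀ k ≤ n, update I (n + 1) j k = I k ∧ update Z (n + 1) z k = Z k := fun k hk ↦
    have hne : k ≠ n + 1 := by lia
    ⟨Function.update_of_ne hne .., Function.update_of_ne hne ..⟩
  constructor
  · intro hω
    refine ⟨fun k hk ↦ ?_, by simpa using hω (n + 1) le_rfl⟩
    simpa only [hprefix k hk] using hω k (Nat.le_succ_of_le hk)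
  · rintro ⟨hω, hlast⟩ k hk
    rcases hk.lt_or_eq with hk | rfl
    · simpa only [hprefix k (Nat.le_of_lt_succ hk)] using hω k (Nat.le_of_lt_succ hk)
    · simpa using hlast

lemma preimage_inter_pathEvent_inter_forall (η : ℕ → Ω → ι) (ζ : ℕ → Ω → M) (I : ℕ → ι)
    (Z : ℕ → M) (n l : ℕ) (j : ι) (z : M) :
    η (n + 1) ⁻¹' {j} ∩ (pathEvent η ζ I Z n ∩ {ω | ∀ k, n < k → k ≤ n + (l + 1) → ζ k ω = z})
      = pathEvent η ζ (update I (n + 1) j) (update Z (n + 1) z) (n + 1)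
        ∩ {ω | ∀ k, n + 1 < k → k ≤ n + 1 + l → ζ k ω = z} := by
  rw [pathEvent_update_succ]
  ext ω
  grind

lemma pathWeight_update_succ (R : ι → ι → M → ℝ) (I : ℕ → ι) (Z : ℕ → M) (n : ℕ) (j : ι) (z : M) :
    pathWeight R (update I (n + 1) j) (update Z (n + 1) z) (n + 1)
      = pathWeight R I Z n * R (I n) j z := by
  rw [pathWeight, Finset.prod_Icc_succ_top (Nat.le_add_left 1 n), Nat.add_sub_cancel,
    Function.update_self, Function.update_self, Function.update_of_ne n.lt_succ_self.ne]
  congr 1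
  refine Finset.prod_congr rfl fun k hk ↦ ?_
  have hk := (Finset.mem_Icc.1 hk).2
  rw [Function.update_of_ne (by lia), Function.update_of_ne (by lia),
    Function.update_of_ne (by lia)]

namespace IsMarkovRenewal

variable [MeasurableSpace ι] [MeasurableSpace M] [MeasurableSpace Ω]
  {η : ℕ → Ω → ι} {ζ : ℕ → Ω → M} {μ : ι → Measure Ω} {R : ι → ι → M → ℝ}

lemma pathWeight_mul_nonpos (h : IsMarkovRenewal η ζ μ R) {I : ℕ → ι} {Z : ℕ → M} {n : ℕ}
    (hn : pathWeight R I Z n ≤ 0) (j : ι) (z : M) : pathWeight R I Z n * R (I n) j z ≤ 0 := by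
  have hmono : μ (I 0) (pathEvent η ζ I Z n ∩ {ω | η (n + 1) ω = j ∧ ζ (n + 1) ω = z})
      ≤ μ (I 0) (pathEvent η ζ I Z n) := measure_mono inter_subset_left
  have hI0 : update I (n + 1) j 0 = I 0 := Function.update_of_ne n.succ_ne_zero.symm ..
  have hext := h.measure_pathEvent (n + 1) (update I (n + 1) j) (update Z (n + 1) z)
  rw [pathEvent_update_succ, pathWeight_update_succ, hI0] at hext
  rwa [hext, h.measure_pathEvent, ENNReal.ofReal_of_nonpos hn, nonpos_iff_eq_zero,
    ENNReal.ofReal_eq_zero] at hmono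

lemma nonneg (h : IsMarkovRenewal η ζ μ R)
    (hconn : ∀ i j, Relation.ReflTransGen (fun x y ↦ ∃ z, 0 < R x y z) i j) (i j : ι) (z : M) :
    0 ≤ R i j z := by
  -- A path of negative weight could be extended along positive steps to any state, whose
  -- outgoing steps would then all have to be nonnegative.
  let S (x : ι) : Prop := ∃ n I Z, I n = x ∧ pathWeight R I Z n < 0
  have hS_nonneg {x : ι} (hx : S x) (y : ι) (z : M) : 0 ≤ R x y z := by
    obtain ⟨n, I, Z, rfl, hneg⟩ := hx
    exact nonneg_of_mul_nonpos_right (h.pathWeight_mul_nonpos hneg.le y z) hneg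
  have hS_edge {x y : ι} (hx : S x) (hxy : ∃ z, 0 < R x y z) : S y := by
    obtain ⟨n, I, Z, rfl, hneg⟩ := hx
    obtain ⟨z, hz⟩ := hxy
    refine ⟨n + 1, update I (n + 1) y, update Z (n + 1) z, Function.update_self .., ?_⟩
    rw [pathWeight_update_succ]
    exact mul_neg_of_neg_of_pos hneg hz
  have hS_reach {x y : ι} (hxy : Relation.ReflTransGen (fun x y ↦ ∃ z, 0 < R x y z) x y)
      (hx : S x) : S y := by
    induction hxy with
    | refl => exact hx
    | tail _ hyz ih => exact hS_edge ih hyz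
  by_contra! hneg
  have hSj : S j := ⟨1, fun k ↦ if k = 0 then i else j, fun _ ↦ z, by simp, by simpa [pathWeight]⟩
  exact hneg.not_ge (hS_nonneg (hS_reach (hconn j i) hSj) j z)

variable [Fintype ι] [MeasurableSingletonClass ι]

lemma measureReal_pathEvent_inter_forall [DecidableEq ι] (h : IsMarkovRenewal η ζ μ R)
    (hR : ∀ i j z, 0 ≤ R i j z) (z : M) (l n : ℕ) (I : ℕ → ι) (Z : ℕ → M) :
    (μ (I 0)).real (pathEvent η ζ I Z n ∩ {ω | ∀ k, n < k → k ≤ n + l → ζ k ω = z})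
      = pathWeight R I Z n * (markMatrix R z ^ l *ᵥ 1) (I n) := by
  induction l generalizing n I Z with
  | zero =>
    have hweight : 0 ≤ pathWeight R I Z n := Finset.prod_nonneg fun k _ ↦ hR _ _ _
    have hvacuous : {ω | ∀ k, n < k → k ≤ n + 0 → ζ k ω = z} = univ :=
      eq_univ_of_forall fun ω k hk hk' ↦ absurd hk' hk.not_ge
    rw [hvacuous, inter_univ, measureReal_def, h.measure_pathEvent, ENNReal.toReal_ofReal hweight,
      pow_zero, Matrix.one_mulVec, Pi.one_apply, mul_one]
  | succ l ih =>
    set A := pathEvent η ζ I Z n ∩ {ω | ∀ k, n < k → k ≤ n + (l + 1) → ζ k ω = z}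
    have : IsProbabilityMeasure (μ (I 0)) := h.isProbabilityMeasure _
    have hsplit (j : ι) : (μ (I 0)).real (η (n + 1) ⁻¹' {j} ∩ A)
        = pathWeight R I Z n * R (I n) j z * (markMatrix R z ^ l *ᵥ 1) j := by
      have hI0 : update I (n + 1) j 0 = I 0 := Function.update_of_ne n.succ_ne_zero.symm ..
      rw [preimage_inter_pathEvent_inter_forall, ← hI0, ih, pathWeight_update_succ,
        Function.update_self]
    calc (μ (I 0)).real A = ∑ j, (μ (I 0)).real (η (n + 1) ⁻¹' {j} ∩ A) :=
          measureReal_eq_sum_preimage_inter (h.measurable_state (n + 1)) A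
      _ = pathWeight R I Z n * (markMatrix R z ^ (l + 1) *ᵥ 1) (I n) := by
          simp only [hsplit, pow_succ', ← Matrix.mulVec_mulVec, mul_assoc, ← Finset.mul_sum]
          rfl

lemma measureReal_forall_mark [DecidableEq ι] (h : IsMarkovRenewal η ζ μ R)
    (hR : ∀ i j z, 0 ≤ R i j z) (z : M) (l : ℕ) (i : ι) :
    (μ i).real {ω | ∀ k, 1 ≤ k → k ≤ l → ζ k ω = z} = (markMatrix R z ^ l *ᵥ 1) i := by
  have : IsProbabilityMeasure (μ i) := h.isProbabilityMeasure i
  have hevent : pathEvent η ζ (fun _ ↦ i) (fun _ ↦ z) 0 = η 0 ⁻¹' {i} := by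
    ext ω
    simp [pathEvent]
  have hstart : ∀ᵐ ω ∂μ i, ω ∈ η 0 ⁻¹' {i} := by
    have hone := h.measure_pathEvent 0 (fun _ ↦ i) (fun _ ↦ z)
    rw [hevent, show pathWeight R _ _ 0 = 1 from Finset.prod_empty, ENNReal.ofReal_one] at hone
    exact (mem_ae_iff_prob_eq_one (h.measurable_state 0 (measurableSet_singleton i))).2 hone
  calc (μ i).real {ω | ∀ k, 1 ≤ k → k ≤ l → ζ k ω = z}
      = (μ i).real (η 0 ⁻¹' {i} ∩ {ω | ∀ k, 0 < k → k ≤ 0 + l → ζ k ω = z}) := by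
        rw [zero_add]
        exact measureReal_congr
          (inter_ae_eq_right_of_ae_eq_univ (eventuallyEq_univ.2 hstart)).symm
    _ = (markMatrix R z ^ l *ᵥ 1) i := by
        rw [← hevent, h.measureReal_pathEvent_inter_forall hR z l 0 (fun _ ↦ i) (fun _ ↦ z)]
        simp [pathWeight]

lemma measureReal_mark_one (h : IsMarkovRenewal η ζ μ R) (hR : ∀ i j z, 0 ≤ R i j z) (z : M)
    (i : ι) : (μ i).real {ω | ζ 1 ω = z} = (markMatrix R z *ᵥ 1) i := by
  have hone : {ω | ζ 1 ω = z} = {ω | ∀ k, 1 ≤ k → k ≤ 1 → ζ k ω = z} := by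
    ext ω
    exact ⟨fun hω k hk hk' ↦ le_antisymm hk' hk ▸ hω, fun hω ↦ hω 1 le_rfl le_rfl⟩
  classical rw [hone, h.measureReal_forall_mark hR, pow_one]

lemma sum_markMatrix_mem_rowStochastic [DecidableEq ι] [Fintype M] [MeasurableSingletonClass M]
    (h : IsMarkovRenewal η ζ μ R) (hR : ∀ i j z, 0 ≤ R i j z) :
    ∑ z, markMatrix R z ∈ Matrix.rowStochastic ℝ ι := by
  refine ⟨fun i j ↦ ?_, funext fun i ↦ ?_⟩
  · rw [Matrix.sum_apply]
    exact Finset.sum_nonneg fun z _ ↦ hR i j z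
  · have : IsProbabilityMeasure (μ i) := h.isProbabilityMeasure i
    rw [Matrix.sum_mulVec, Finset.sum_apply]
    simp only [← h.measureReal_mark_one hR]
    calc ∑ z, (μ i).real (ζ 1 ⁻¹' {z}) = (μ i).real univ := by
          rw [measureReal_eq_sum_preimage_inter (h.measurable_mark 1)]
          simp only [inter_univ]
      _ = 1 := probReal_univ

end IsMarkovRenewal
/-- The probability of the mark `true` on the first step, as a function of the initial state. -/
def eventProb [MeasurableSpace Ω] (ζ : ℕ → Ω → Bool) (μ : ι → Measure Ω) (i : ι) : ℝ :=
  (μ i).real {ω | ζ 1 ω = true}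

variable [Fintype ι] [MeasurableSpace Ω]

lemma toReal_sum_smul_apply {μ : ι → Measure Ω} [∀ i, IsFiniteMeasure (μ i)] {q : ι → ℝ}
    (hq : 0 ≤ q) (A : Set Ω) :
    ((∑ i, ENNReal.ofReal (q i) • μ i) A).toReal = q ⬝ᵥ fun i ↦ (μ i).real A := by
  simp only [Measure.finsetSum_apply, Measure.smul_apply, smul_eq_mul]
  rw [ENNReal.toReal_sum fun i _ ↦ by finiteness]
  refine Finset.sum_congr rfl fun i _ ↦ ?_
  rw [ENNReal.toReal_mul, ENNReal.toReal_ofReal (hq i)]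
  rfl

variable [DecidableEq ι] [MeasurableSpace ι] [MeasurableSingletonClass ι]

theorem IsMarkovRenewal.abs_survival_sub_pow_le {η : ℕ → Ω → ι} {ζ : ℕ → Ω → Bool}
    {μ : ι → Measure Ω} {R : ι → ι → Bool → ℝ} (h : IsMarkovRenewal η ζ μ R)
    (hR : ∀ i j z, 0 ≤ R i j z) {K : ℝ}
    (hK : HasAccessBound (markMatrix R false + markMatrix R true) K) {π q : ι → ℝ}
    (hπ : π ∈ stdSimplex ℝ ι) (hπR : π ᵥ* (markMatrix R false + markMatrix R true) = π)
    (hq : q ∈ stdSimplex ℝ ι) (n : ℕ) :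
    |((∑ i, ENNReal.ofReal (q i) • μ i) {ω | ∀ k, 1 ≤ k → k ≤ n → ζ k ω = false}).toReal
        - (1 - π ⬝ᵥ eventProb ζ μ) ^ n| ≤ 2 * (K * ‖eventProb ζ μ‖) := by
  have := h.isProbabilityMeasure
  have hstoch : markMatrix R false + markMatrix R true ∈ Matrix.rowStochastic ℝ ι := by
    simpa [add_comm] using h.sum_markMatrix_mem_rowStochastic hR
  have hr : eventProb ζ μ = markMatrix R true *ᵥ 1 :=
    funext fun i ↦ h.measureReal_mark_one hR true i
  have hr_norm : markMatrix R true *ᵥ 1 ≤ ‖eventProb ζ μ‖ • 1 := fun i ↦ by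
    simpa [← hr] using (le_abs_self _).trans (norm_le_pi_norm (eventProb ζ μ) i)
  have hbound (i : ι) := hK.abs_pow_mulVec_one_sub_pow_le (hR · · false) (hR · · true) hstoch hπ
    hπR (norm_nonneg _) hr_norm n i
  rw [toReal_sum_smul_apply hq.1]
  simpa only [dotProduct_one, hq.2, one_mul, h.measureReal_forall_mark hR, ← hr]
    using abs_dotProduct_sub_le hq.1 hbound

end MarkovRenewal

lemma setOf_forall_mul_le_eq {Ω : Type*} (ζ : ℕ → Ω → Bool) {p t : ℝ} (hp : 0 < p) (ht : 0 ≤ t) :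
    {ω | ∀ n : ℕ, 1 ≤ n → p * n ≤ t → ζ n ω = false}
      = {ω | ∀ n, 1 ≤ n → n ≤ ⌊t / p⌋₊ → ζ n ω = false} := by
  simp only [Nat.le_floor_iff (div_nonneg ht hp.le), le_div_iff₀' hp]

lemma tendsto_one_sub_pow_floor {t : ℝ} (ht : 0 ≤ t) :
    Tendsto (fun p : ℝ ↦ (1 - p) ^ ⌊t / p⌋₊) (𝓝[>] 0) (𝓝 (Real.exp (-t))) := by
  have hbase : Tendsto (fun p : ℝ ↦ (1 - p) ^ p⁻¹) (𝓝[>] 0) (𝓝 (Real.exp (-1))) := by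
    refine ((Real.tendsto_one_add_div_rpow_exp (-1)).comp tendsto_inv_nhdsGT_zero).congr fun p ↦ ?_
    simp [sub_eq_add_neg]
  have hexponent : Tendsto (fun p : ℝ ↦ ⌊t * p⁻¹⌋₊ / p⁻¹) (𝓝[>] 0) (𝓝 t) :=
    (tendsto_nat_floor_mul_div_atTop ht).comp tendsto_inv_nhdsGT_zero
  have hpow := hbase.rpow hexponent (.inl (Real.exp_ne_zero _))
  rw [← Real.exp_mul, neg_one_mul] at hpow
  refine hpow.congr' ?_
  filter_upwards [Ioo_mem_nhdsGT one_pos] with p hp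
  rw [← Real.rpow_mul (sub_nonneg.2 hp.2.le), mul_div_cancel₀ _ (inv_ne_zero hp.1.ne'),
    Real.rpow_natCast, div_eq_mul_inv]

section Limit

open scoped Matrix

variable {α ι Ω : Type*} {F : Filter α} [Fintype ι]

lemma tendsto_dotProduct_nhdsGT_zero [DecidableEq ι] {P : α → Matrix ι ι ℝ}
    {π r : α → ι → ℝ} {K : ℝ}
    (hP : ∀ᶠ x in F, ∀ i j, 0 ≤ P x i j) (hK : ∀ᶠ x in F, HasAccessBound (P x) K)
    (hπ : ∀ᶠ x in F, π x ∈ stdSimplex ℝ ι) (hπP : ∀ᶠ x in F, π x ᵥ* P x = π x)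
    (hr0 : ∀ᶠ x in F, 0 < r x) (hr : Tendsto r F (𝓝 0)) :
    Tendsto (fun x ↦ π x ⬝ᵥ r x) F (𝓝[>] 0) := by
  refine tendsto_nhdsWithin_iff.2
    ⟨squeeze_zero_norm' ?_ (tendsto_zero_iff_norm_tendsto_zero.1 hr), ?_⟩
  · filter_upwards [hπ] with x hπ
    simpa [dotProduct_one, hπ.2] using
      abs_dotProduct_sub_le (c := 0) hπ.1 fun i ↦ by simpa using norm_le_pi_norm (r x) i
  · filter_upwards [hP, hK, hπ, hπP, hr0] with x hP hK hπ hπP hr0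
    obtain ⟨hr_nonneg, i, hi⟩ := Pi.lt_def.1 hr0
    exact Finset.sum_pos' (fun j _ ↦ mul_nonneg (hπ.1 j) (hr_nonneg j))
      ⟨i, Finset.mem_univ i, mul_pos (hK.pos_of_vecMul_eq_self hP hπ hπP i) hi⟩

variable [MeasurableSpace ι] [MeasurableSingletonClass ι] [MeasurableSpace Ω]

theorem tendsto_survival_exp_neg {η : α → ℕ → Ω → ι} {ζ : α → ℕ → Ω → Bool}
    {μ : α → ι → Measure Ω} {R : α → ι → ι → Bool → ℝ} {P : α → Matrix ι ι ℝ}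
    {π q : α → ι → ℝ} {ν : α → Measure Ω}
    (h : ∀ᶠ x in F, IsMarkovRenewal (η x) (ζ x) (μ x) (R x))
    (hP : ∀ᶠ x in F, P x = markMatrix (R x) false + markMatrix (R x) true)
    (hconn : ∀ i j, Relation.ReflTransGen (IsPersistent F P) i j)
    (hπ : ∀ᶠ x in F, π x ∈ stdSimplex ℝ ι) (hπP : ∀ᶠ x in F, π x ᵥ* P x = π x)
    (hr0 : ∀ᶠ x in F, 0 < eventProb (ζ x) (μ x))
    (hr : Tendsto (fun x ↦ eventProb (ζ x) (μ x)) F (𝓝 0))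
    (hq : ∀ᶠ x in F, q x ∈ stdSimplex ℝ ι)
    (hν : ∀ᶠ x in F, ν x = ∑ i, ENNReal.ofReal (q x i) • μ x i) {t : ℝ} (ht : 0 ≤ t) :
    Tendsto (fun x ↦ (ν x {ω | ∀ n : ℕ, 1 ≤ n →
        π x ⬝ᵥ eventProb (ζ x) (μ x) * n ≤ t → ζ x n ω = false}).toReal)
      F (𝓝 (Real.exp (-t))) := by
  classical
  have hR : ∀ᶠ x in F, ∀ i j z, 0 ≤ R x i j z := by
    filter_upwards [h, hP, eventually_reflTransGen_pos hconn] with x h hP hconn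
    refine h.nonneg fun i j ↦ Relation.ReflTransGen.mono (fun y z hyz ↦ ?_) i j (hconn i j)
    rw [hP] at hyz
    by_contra! hnonpos
    exact hyz.not_ge (add_nonpos (hnonpos false) (hnonpos true))
  have hP0 : ∀ᶠ x in F, ∀ i j, 0 ≤ P x i j := by
    filter_upwards [hR, hP] with x hR hP i j
    exact hP ▸ add_nonneg (hR i j false) (hR i j true)
  obtain ⟨K, hK⟩ := exists_eventually_hasAccessBound hP0 hconn
  have hp := tendsto_dotProduct_nhdsGT_zero hP0 hK hπ hπP hr0 hr
  have herror : Tendsto (fun x ↦ 2 * (K * ‖eventProb (ζ x) (μ x)‖)) F (𝓝 0) := by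
    simpa using (hr.norm.const_mul K).const_mul 2
  refine tendsto_of_tendsto_of_dist ((tendsto_one_sub_pow_floor ht).comp hp)
    (squeeze_zero' (.of_forall fun _ ↦ dist_nonneg) ?_ herror)
  filter_upwards [h, hP, hR, hK, hπ, hπP, hq, hν, (tendsto_nhdsWithin_iff.1 hp).2]
    with x h hP hR hK hπ hπP hq hν hp
  rw [dist_comm, Real.dist_eq, hν, setOf_forall_mul_le_eq _ hp ht]
  exact h.abs_survival_sub_pow_le hR (hP ▸ hK) hπ (hP ▸ hπP) hq _

end Limit

lemma IsStationaryDist.vecMul_eq {m : ℕ} {p : Fin m → Fin m → ℝ} {π : Fin m → ℝ}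
    (hπ : IsStationaryDist p π) : Matrix.vecMul π (Matrix.of p) = π :=
  funext fun j ↦ (hπ.2.2 j).symm

/-- Lemma 7: under conditions A and B, the normalized first-rare-event
step counts `ν*_ε = p_ε ν_ε` converge in distribution to an exponential random variable
with parameter 1, i.e. `P(p_ε ν_ε > t) → e^{−t}` for every `t ≥ 0`.  Here the event
`{p_ε ν_ε > t}` is the event that no rare event occurs among the steps `n ≥ 1` with
`p_ε n ≤ t`. -/
theorem stmt14 {m : ℕ} (hm : 0 < m) (ε₀ : ℝ) (hε₀ : 0 < ε₀)
    {Ω : Type} [MeasurableSpace Ω]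
    (η : ℝ → ℕ → Ω → Fin m) (ζ : ℝ → ℕ → Ω → Bool)
    (Pstart : ℝ → Fin m → Measure Ω)
    (hprob : ∀ ε i, IsProbabilityMeasure (Pstart ε i))
    (hmeas : ∀ ε n, Measurable (η ε n) ∧ Measurable (ζ ε n))
    -- Markov renewal structure with kernel R_{ε,ij}(ι)
    (R : ℝ → Fin m → Fin m → Bool → ℝ)
    (hMRP : ∀ ε ∈ Ioc (0:ℝ) ε₀, ∀ n : ℕ, ∀ I : ℕ → Fin m, ∀ Z : ℕ → Bool,
      Pstart ε (I 0) {ω | ∀ k ≤ n, (η ε k ω = I k ∧ (1 ≤ k → ζ ε k ω = Z k))}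
        = ENNReal.ofReal (∏ k ∈ Finset.Icc 1 n, R ε (I (k - 1)) (I k) (Z k)))
    -- embedded Markov chain and condition B
    (p : ℝ → Fin m → Fin m → ℝ)
    (hp : ∀ ε ∈ Ioc (0:ℝ) ε₀, ∀ i j, p ε i j = R ε i j false + R ε i j true)
    (hB : CondB p)
    (π : ℝ → Fin m → ℝ)
    (hπ : ∀ᶠ ε in 𝓝[>] (0:ℝ), IsStationaryDist (fun i j => p ε i j) (π ε))
    -- condition A
    (hA1 : ∀ ε ∈ Ioc (0:ℝ) ε₀, ∃ i, 0 < rareP Pstart ζ ε i)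
    (hA2 : ∀ i, Tendsto (fun ε => rareP Pstart ζ ε i) (𝓝[>] (0:ℝ)) (𝓝 0))
    -- arbitrary family of initial distributions
    (q : ℝ → Fin m → ℝ) (Pq : ℝ → Measure Ω)
    (hq : ∀ ε ∈ Ioc (0:ℝ) ε₀, (∀ i, 0 ≤ q ε i) ∧ ∑ i, q ε i = 1)
    (hmix : ∀ ε ∈ Ioc (0:ℝ) ε₀, Pq ε = ∑ i, ENNReal.ofReal (q ε i) • Pstart ε i) :
    ∀ t : ℝ, 0 ≤ t →
      Tendsto
        (fun ε => (Pq ε {ω | ∀ n : ℕ, 1 ≤ n →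
          avgRare Pstart ζ π ε * (n : ℝ) ≤ t → ζ ε n ω = false}).toReal)
        (𝓝[>] (0:ℝ)) (𝓝 (Real.exp (-t))) := by
  intro t ht
  have hε : ∀ᶠ ε in 𝓝[>] (0 : ℝ), ε ∈ Ioc 0 ε₀ := Ioc_mem_nhdsGT hε₀
  have hMR : ∀ ε ∈ Ioc 0 ε₀, IsMarkovRenewal (η ε) (ζ ε) (Pstart ε) (R ε) := fun ε hε ↦
    ⟨hprob ε, fun n ↦ (hmeas ε n).1, fun n ↦ (hmeas ε n).2, hMRP ε hε⟩
  have hrare_pos : ∀ ε ∈ Ioc 0 ε₀, 0 < rareP Pstart ζ ε := fun ε hε ↦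
    Pi.lt_def.2 ⟨fun _ ↦ ENNReal.toReal_nonneg, hA1 ε hε⟩
  exact tendsto_survival_exp_neg (P := fun ε ↦ Matrix.of (p ε)) (hε.mono hMR)
    (hε.mono fun ε hε ↦ Matrix.ext (hp ε hε)) hB.reflTransGen_isPersistent
    (hπ.mono fun _ hπ ↦ ⟨hπ.1, hπ.2.1⟩) (hπ.mono fun _ hπ ↦ hπ.vecMul_eq)
    (hε.mono hrare_pos) (tendsto_pi_nhds.2 hA2) (hε.mono hq) (hε.mono hmix) ht
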